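/- arXiv:1508.00232 — 2 statements merged into one kernel-verified Lean document; each statement's English description precedes it below -/
import Mathlib

section
/- The process r̄(k) = (r(k), s(k), σ(k), ρ(k)) is a time-homogeneous Markov chain with state space 𝔛 and transition probabilities p̄: for every k ≥ 0, every χ' ∈ 𝔛, and all χ_0,…,χ_k ∈ 𝔛, one has Pr(r̄(k+1)=χ' and r̄(j)=χ_j for all 0 ≤ j ≤ k) = p̄_{χ_k χ'} · Pr(r̄(j)=χ_j for all 0 ≤ j ≤ k). -/
open MeasureTheory ProbabilityTheory Matrix

noncomputable section

/-- The state space `[N] × [M] × [N] × [T]` of the extended process `r̄`.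
`Fin N`, `Fin M`, `Fin T` play the roles of `[N] = {1,…,N}`, `[M]`, `[T]`
(with `Fin T` being the 0-indexed version of `[T] = {1,…,T}`, i.e. `δ ∈ [T]`
corresponds to `δ - 1 : Fin T`). -/
abbrev XT (NN MM T : ℕ) : Type := Fin NN × Fin MM × Fin NN × Fin T

/-- `X` is a time-homogeneous Markov chain with transition probability matrix `P`:
for every `k`, every state `j` and every sequence of states `i`,
`Pr(X(k+1) = j ∧ X(l) = i l for all l ≤ k) = P (i k) j * Pr(X(l) = i l for all l ≤ k)`. -/
def IsMarkovChain {Ω : Type} {_mΩ : MeasurableSpace Ω} (μ : Measure Ω) {S : Type}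
    (X : ℕ → Ω → S) (P : S → S → ℝ) : Prop :=
  ∀ (k : ℕ) (j : S) (i : ℕ → S),
    (μ {ω | X (k + 1) ω = j ∧ ∀ l ≤ k, X l ω = i l}).toReal
      = P (i k) j * (μ {ω | ∀ l ≤ k, X l ω = i l}).toReal

/-- `⌊m⌋_T`, the unique element of `{0,…,T-1}` congruent to `m` modulo `T`, as `Fin T`. -/
def intToFin (T : ℕ) [NeZero T] (a : ℤ) : Fin T :=
  ⟨(a % (T : ℤ)).toNat, by
    have hT : 0 < (T : ℤ) := by
      exact_mod_cast Nat.pos_of_ne_zero (NeZero.ne T)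
    have h1 : 0 ≤ a % (T : ℤ) := Int.emod_nonneg a (by omega)
    have h2 : a % (T : ℤ) < (T : ℤ) := Int.emod_lt_of_pos a hT
    omega⟩

-- `τ(k)`: the most recent observation time `≤ k` (i.e. the largest `j ≤ k` with
-- `f(s(j)) = 1`), or `τ₀` if no observation has occurred up to time `k` (`k < t₀`).
open Classical in
def tauZ {Ω : Type} {MM : ℕ} (s : ℕ → Ω → Fin MM) (f : Fin MM → Bool)
    (τ₀ : ℤ) (k : ℕ) (ω : Ω) : ℤ :=
  if ∃ j ≤ k, f (s j ω) = true
  then ((Nat.findGreatest (fun j => f (s j ω) = true) k : ℕ) : ℤ)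
  else τ₀

-- `σ(k) = r(τ(k))` if an observation occurred by time `k` (i.e. `k ≥ t₀`), else `σ₀`.
open Classical in
def sigmaProc {Ω : Type} {NN MM : ℕ} (r : ℕ → Ω → Fin NN) (s : ℕ → Ω → Fin MM)
    (f : Fin MM → Bool) (σ₀ : Fin NN) (k : ℕ) (ω : Ω) : Fin NN :=
  if ∃ j ≤ k, f (s j ω) = true
  then r (Nat.findGreatest (fun j => f (s j ω) = true) k) ω
  else σ₀

/-- `ρ(k) = ⌊k - τ(k)⌋_T + 1 ∈ [T]`, represented 0-indexed as `⌊k - τ(k)⌋_T : Fin T`. -/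
def rhoProc {Ω : Type} {MM T : ℕ} [NeZero T] (s : ℕ → Ω → Fin MM) (f : Fin MM → Bool)
    (τ₀ : ℤ) (k : ℕ) (ω : Ω) : Fin T :=
  intToFin T ((k : ℤ) - tauZ s f τ₀ k ω)

/-- The extended process `r̄(k) = (r(k), s(k), σ(k), ρ(k))`. -/
def rbarProc {Ω : Type} {NN MM T : ℕ} [NeZero T] (r : ℕ → Ω → Fin NN)
    (s : ℕ → Ω → Fin MM) (f : Fin MM → Bool) (τ₀ : ℤ) (σ₀ : Fin NN)
    (k : ℕ) (ω : Ω) : XT NN MM T :=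
  (r k ω, s k ω, sigmaProc r s f σ₀ k ω, rhoProc s f τ₀ k ω)

/-- Membership in `𝔛`: if `f(β) = 1` then `α = γ` and `δ = 1` (0-indexed: `δ = 0`). -/
def inX {NN MM T : ℕ} [NeZero T] (f : Fin MM → Bool) (χ : XT NN MM T) : Prop :=
  f χ.2.1 = true → χ.1 = χ.2.2.1 ∧ χ.2.2.2 = 0

/-- The transition probabilities `p̄_{χχ'}` of the extended chain. The condition
`⌊δ' - δ - 1⌋_T = 0` for `δ, δ' ∈ [T]` is, in 0-indexed form, `δ' = δ + 1` in `Fin T`. -/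
def pbar {NN MM T : ℕ} [NeZero T] (P : Matrix (Fin NN) (Fin NN) ℝ)
    (Q : Matrix (Fin MM) (Fin MM) ℝ) (f : Fin MM → Bool) (χ χ' : XT NN MM T) : ℝ :=
  (if f χ'.2.1 = true
    then (if χ'.1 = χ'.2.2.1 ∧ χ'.2.2.2 = 0 then (1 : ℝ) else 0)
    else (if χ'.2.2.1 = χ.2.2.1 ∧ χ'.2.2.2 = χ.2.2.2 + 1 then (1 : ℝ) else 0))
  * P χ.1 χ'.1 * Q χ.2.1 χ'.2.1

/-- The state trajectory of the closed-loop system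
`x(k+1) = A(mode(k)) x(k) + E(mode(k)) w(k)`, `x(0) = x₀`. -/
def traj {Ω S : Type} {n q : ℕ}
    (Amat : S → Matrix (Fin n) (Fin n) ℝ) (Emat : S → Matrix (Fin n) (Fin q) ℝ)
    (mode : ℕ → Ω → S) (w : ℕ → Ω → Fin q → ℝ) (x0 : Fin n → ℝ) : ℕ → Ω → Fin n → ℝ
  | 0, _ => x0
  | (k + 1), ω =>
      (Amat (mode k ω)).mulVec (traj Amat Emat mode w x0 k ω)
        + (Emat (mode k ω)).mulVec (w k ω)

/-- `A_{K,χ} = A_α + B_α K_{γ,δ}`. -/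
def AKmat {NN MM T n m : ℕ} (A : Fin NN → Matrix (Fin n) (Fin n) ℝ)
    (B : Fin NN → Matrix (Fin n) (Fin m) ℝ)
    (K : Fin NN → Fin T → Matrix (Fin m) (Fin n) ℝ) (χ : XT NN MM T) :
    Matrix (Fin n) (Fin n) ℝ :=
  A χ.1 + B χ.1 * K χ.2.2.1 χ.2.2.2

/-- `C_{K,χ} = C_α + D_α K_{γ,δ}`. -/
def CKmat {NN MM T n m ℓ : ℕ} (C : Fin NN → Matrix (Fin ℓ) (Fin n) ℝ)
    (D : Fin NN → Matrix (Fin ℓ) (Fin m) ℝ)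
    (K : Fin NN → Fin T → Matrix (Fin m) (Fin n) ℝ) (χ : XT NN MM T) :
    Matrix (Fin ℓ) (Fin n) ℝ :=
  C χ.1 + D χ.1 * K χ.2.2.1 χ.2.2.2

/-- Squared Euclidean norm of a vector, as an extended nonnegative real. -/
def sqE {d : ℕ} (v : Fin d → ℝ) : ENNReal := ENNReal.ofReal (∑ i, (v i) ^ 2)

-- The operator `D̄_χ(R) = ∑_{χ' ∈ 𝔛} p̄_{χ'χ} R_{χ'}`.
open Classical in
def Dop {NN MM T n : ℕ} [NeZero T] (P : Matrix (Fin NN) (Fin NN) ℝ)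
    (Q : Matrix (Fin MM) (Fin MM) ℝ) (f : Fin MM → Bool)
    (R : XT NN MM T → Matrix (Fin n) (Fin n) ℝ) (χ : XT NN MM T) :
    Matrix (Fin n) (Fin n) ℝ :=
  ∑ χ' : XT NN MM T, if inX f χ' then pbar P Q f χ' χ • R χ' else 0

-- The operator `F̄_χ(Z) = ∑_{χ' ∈ 𝔛} p̄_{χχ'} Z_{χ,χ'}`.
open Classical in
def Fop {NN MM T n : ℕ} [NeZero T] (P : Matrix (Fin NN) (Fin NN) ℝ)
    (Q : Matrix (Fin MM) (Fin MM) ℝ) (f : Fin MM → Bool)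
    (Z : XT NN MM T → XT NN MM T → Matrix (Fin n) (Fin n) ℝ) (χ : XT NN MM T) :
    Matrix (Fin n) (Fin n) ℝ :=
  ∑ χ' : XT NN MM T, if inX f χ' then pbar P Q f χ χ' • Z χ χ' else 0

/-- A pair `(γ,δ) ∈ [N] × [T]` is admissible if `(α,β,γ,δ) ∈ 𝔛` for some `α, β`. -/
def Admissible {NN MM T : ℕ} [NeZero T] (f : Fin MM → Bool) (g : Fin NN) (d : Fin T) : Prop :=
  ∃ (α : Fin NN) (β : Fin MM), inX (T := T) f (α, β, g, d)

/-- A realization, on some probability space, of the pair of independent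
time-homogeneous Markov chains `(r, s)` with transition matrices `P` and `Q`. -/
structure MJLSReal (NN MM : ℕ) (P : Matrix (Fin NN) (Fin NN) ℝ)
    (Q : Matrix (Fin MM) (Fin MM) ℝ) : Type 1 where
  Ω : Type
  inst : MeasurableSpace Ω
  μ : @Measure Ω inst
  prob : IsProbabilityMeasure μ
  r : ℕ → Ω → Fin NN
  s : ℕ → Ω → Fin MM
  meas_r : ∀ k, Measurable[inst] (r k)
  meas_s : ∀ k, Measurable[inst] (s k)
  markov_r : IsMarkovChain μ r fun i j => P i j
  markov_s : IsMarkovChain μ s fun i j => Q i j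
  indep : IndepFun (fun ω l => r l ω) (fun ω l => s l ω) μ

/-- A realization, on some probability space, of a time-homogeneous Markov chain `θ`
taking values in `𝔛` with transition probabilities `p̄`. -/
structure ThetaReal (NN MM T : ℕ) [NeZero T] (P : Matrix (Fin NN) (Fin NN) ℝ)
    (Q : Matrix (Fin MM) (Fin MM) ℝ) (f : Fin MM → Bool) : Type 1 where
  Ω : Type
  inst : MeasurableSpace Ω
  μ : @Measure Ω inst
  prob : IsProbabilityMeasure μ
  θ : ℕ → Ω → XT NN MM T
  meas : ∀ k, Measurable[inst] (θ k)
  mem : ∀ k ω, inX f (θ k ω)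
  markov : IsMarkovChain μ θ (pbar P Q f)

/-- Mean square stability of the closed-loop system `Σ_K`: there are `c > 0` and
`λ ∈ [0,1)` such that for every realization, every deterministic initialization
(`r(0) = r₀`, `s(0) = s₀` a.s., together with `σ₀` and `τ₀ ≤ 0`, so that `r̄(0)`
is a deterministic element of `𝔛`), every `x₀` and every `k`,
`E[‖x(k)‖²] ≤ c λ^k ‖x₀‖²` (with `w ≡ 0`). -/
def MeanSquareStable {NN MM T n m q : ℕ} [NeZero T]
    (P : Matrix (Fin NN) (Fin NN) ℝ) (Qm : Matrix (Fin MM) (Fin MM) ℝ) (f : Fin MM → Bool)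
    (A : Fin NN → Matrix (Fin n) (Fin n) ℝ) (B : Fin NN → Matrix (Fin n) (Fin m) ℝ)
    (E : Fin NN → Matrix (Fin n) (Fin q) ℝ)
    (K : Fin NN → Fin T → Matrix (Fin m) (Fin n) ℝ) : Prop :=
  ∃ c : ℝ, 0 < c ∧ ∃ lam : ℝ, 0 ≤ lam ∧ lam < 1 ∧
    ∀ (S : MJLSReal NN MM P Qm) (τ₀ : ℤ), τ₀ ≤ 0 →
      ∀ (σ₀ r₀ : Fin NN) (s₀ : Fin MM),
        (∀ᵐ ω ∂S.μ, S.r 0 ω = r₀ ∧ S.s 0 ω = s₀) →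
        ∀ (x0 : Fin n → ℝ) (k : ℕ),
          (∫⁻ ω, sqE (traj (AKmat A B K) (fun χ => E χ.1)
              (rbarProc S.r S.s f τ₀ σ₀) (fun _ _ => 0) x0 k ω) ∂S.μ)
            ≤ ENNReal.ofReal (c * lam ^ k * ∑ i, (x0 i) ^ 2)

/-- Mean square stability of `Σ̄_K` (the system driven by the chain `θ`). -/
def MeanSquareStableBar {NN MM T n m q : ℕ} [NeZero T]
    (P : Matrix (Fin NN) (Fin NN) ℝ) (Qm : Matrix (Fin MM) (Fin MM) ℝ) (f : Fin MM → Bool)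
    (A : Fin NN → Matrix (Fin n) (Fin n) ℝ) (B : Fin NN → Matrix (Fin n) (Fin m) ℝ)
    (E : Fin NN → Matrix (Fin n) (Fin q) ℝ)
    (K : Fin NN → Fin T → Matrix (Fin m) (Fin n) ℝ) : Prop :=
  ∃ c : ℝ, 0 < c ∧ ∃ lam : ℝ, 0 ≤ lam ∧ lam < 1 ∧
    ∀ (S : ThetaReal NN MM T P Qm f) (χ : XT NN MM T), inX f χ →
      (∀ᵐ ω ∂S.μ, S.θ 0 ω = χ) →
      ∀ (x0 : Fin n → ℝ) (k : ℕ),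
        (∫⁻ ω, sqE (traj (AKmat A B K) (fun χ' => E χ'.1) S.θ (fun _ _ => 0) x0 k ω) ∂S.μ)
          ≤ ENNReal.ofReal (c * lam ^ k * ∑ i, (x0 i) ^ 2)

/-- The impulse disturbance `w = e_i φ`, i.e. `w(0) = e_i` and `w(k) = 0` for `k ≥ 1`. -/
def impulse {Ω : Type} (q : ℕ) (i : Fin q) : ℕ → Ω → Fin q → ℝ :=
  fun k _ j => if k = 0 ∧ j = i then 1 else 0

/-- `∑_k E[‖z(k; 0, χ, e_i φ)‖²]` for `Σ_K` on a given realization with data `(τ₀, σ₀)`. -/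
def H2TermSigma {NN MM T n m q ℓ : ℕ} [NeZero T]
    {P : Matrix (Fin NN) (Fin NN) ℝ} {Qm : Matrix (Fin MM) (Fin MM) ℝ}
    (S : MJLSReal NN MM P Qm) (f : Fin MM → Bool) (τ₀ : ℤ) (σ₀ : Fin NN)
    (A : Fin NN → Matrix (Fin n) (Fin n) ℝ) (B : Fin NN → Matrix (Fin n) (Fin m) ℝ)
    (C : Fin NN → Matrix (Fin ℓ) (Fin n) ℝ) (D : Fin NN → Matrix (Fin ℓ) (Fin m) ℝ)
    (E : Fin NN → Matrix (Fin n) (Fin q) ℝ)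
    (K : Fin NN → Fin T → Matrix (Fin m) (Fin n) ℝ) (i : Fin q) : ENNReal :=
  ∑' k : ℕ, ∫⁻ ω, sqE ((CKmat C D K (rbarProc S.r S.s f τ₀ σ₀ k ω)).mulVec
      (traj (AKmat A B K) (fun χ => E χ.1) (rbarProc S.r S.s f τ₀ σ₀)
        (impulse q i) 0 k ω)) ∂S.μ

-- `‖Σ_K‖₂² < γ`, where `‖Σ_K‖₂² = ∑_{i=1}^q ∑_{χ ∈ 𝔛} μ̄(χ) ‖z(⬝;0,χ,e_iφ)‖₂²` and the
-- expectations are over arbitrary realizations with deterministic initialization `r̄(0) = χ`.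
open Classical in
def H2SqLtSigma {NN MM T n m q ℓ : ℕ} [NeZero T]
    (P : Matrix (Fin NN) (Fin NN) ℝ) (Qm : Matrix (Fin MM) (Fin MM) ℝ) (f : Fin MM → Bool)
    (A : Fin NN → Matrix (Fin n) (Fin n) ℝ) (B : Fin NN → Matrix (Fin n) (Fin m) ℝ)
    (C : Fin NN → Matrix (Fin ℓ) (Fin n) ℝ) (D : Fin NN → Matrix (Fin ℓ) (Fin m) ℝ)
    (E : Fin NN → Matrix (Fin n) (Fin q) ℝ)
    (K : Fin NN → Fin T → Matrix (Fin m) (Fin n) ℝ)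
    (μbar : XT NN MM T → ℝ) (γ : ℝ) : Prop :=
  ∀ (S : Fin q → XT NN MM T → MJLSReal NN MM P Qm)
    (τ : Fin q → XT NN MM T → ℤ) (σv : Fin q → XT NN MM T → Fin NN),
    (∀ i χ, inX f χ → τ i χ ≤ 0 ∧
        (∀ᵐ ω ∂(S i χ).μ, rbarProc (S i χ).r (S i χ).s f (τ i χ) (σv i χ) 0 ω = χ)) →
    (∑ i : Fin q, ∑ χ : XT NN MM T,
        if inX f χ
        then ENNReal.ofReal (μbar χ) * H2TermSigma (S i χ) f (τ i χ) (σv i χ) A B C D E K i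
        else 0)
      < ENNReal.ofReal γ

/-- `∑_k E[‖z̄(k; 0, χ, e_i φ)‖²]` for `Σ̄_K` on a given realization of `θ`. -/
def H2TermBar {NN MM T n m q ℓ : ℕ} [NeZero T]
    {P : Matrix (Fin NN) (Fin NN) ℝ} {Qm : Matrix (Fin MM) (Fin MM) ℝ} {f : Fin MM → Bool}
    (S : ThetaReal NN MM T P Qm f)
    (A : Fin NN → Matrix (Fin n) (Fin n) ℝ) (B : Fin NN → Matrix (Fin n) (Fin m) ℝ)
    (C : Fin NN → Matrix (Fin ℓ) (Fin n) ℝ) (D : Fin NN → Matrix (Fin ℓ) (Fin m) ℝ)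
    (E : Fin NN → Matrix (Fin n) (Fin q) ℝ)
    (K : Fin NN → Fin T → Matrix (Fin m) (Fin n) ℝ) (i : Fin q) : ENNReal :=
  ∑' k : ℕ, ∫⁻ ω, sqE ((CKmat C D K (S.θ k ω)).mulVec
      (traj (AKmat A B K) (fun χ => E χ.1) S.θ (impulse q i) 0 k ω)) ∂S.μ

-- `‖Σ̄_K‖₂² < γ` (the `H₂` norm of `Σ̄_K`, defined with `θ` in place of `r̄`).
open Classical in
def H2SqLtBar {NN MM T n m q ℓ : ℕ} [NeZero T]
    (P : Matrix (Fin NN) (Fin NN) ℝ) (Qm : Matrix (Fin MM) (Fin MM) ℝ) (f : Fin MM → Bool)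
    (A : Fin NN → Matrix (Fin n) (Fin n) ℝ) (B : Fin NN → Matrix (Fin n) (Fin m) ℝ)
    (C : Fin NN → Matrix (Fin ℓ) (Fin n) ℝ) (D : Fin NN → Matrix (Fin ℓ) (Fin m) ℝ)
    (E : Fin NN → Matrix (Fin n) (Fin q) ℝ)
    (K : Fin NN → Fin T → Matrix (Fin m) (Fin n) ℝ)
    (μbar : XT NN MM T → ℝ) (γ : ℝ) : Prop :=
  ∀ (S : Fin q → XT NN MM T → ThetaReal NN MM T P Qm f),
    (∀ i χ, inX f χ → (∀ᵐ ω ∂(S i χ).μ, (S i χ).θ 0 ω = χ)) →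
    (∑ i : Fin q, ∑ χ : XT NN MM T,
        if inX f χ
        then ENNReal.ofReal (μbar χ) * H2TermBar (S i χ) A B C D E K i
        else 0)
      < ENNReal.ofReal γ

/-- The σ-algebra `Θ_k` generated by `r(0), s(0), …, r(k), s(k)`, for a realization. -/
def sigFiltSigma {NN MM : ℕ} {P : Matrix (Fin NN) (Fin NN) ℝ}
    {Q : Matrix (Fin MM) (Fin MM) ℝ} (S : MJLSReal NN MM P Q) (k : ℕ) :
    MeasurableSpace S.Ω :=
  ⨆ j ∈ Finset.range (k + 1),
    (MeasurableSpace.comap (S.r j) inferInstance ⊔ MeasurableSpace.comap (S.s j) inferInstance)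

/-- The σ-algebra generated by `θ(0), …, θ(k)`, for a realization of `θ`. -/
def sigFiltBar {NN MM T : ℕ} [NeZero T] {P : Matrix (Fin NN) (Fin NN) ℝ}
    {Q : Matrix (Fin MM) (Fin MM) ℝ} {f : Fin MM → Bool} (S : ThetaReal NN MM T P Q f)
    (k : ℕ) : MeasurableSpace S.Ω :=
  ⨆ j ∈ Finset.range (k + 1), MeasurableSpace.comap (S.θ j) inferInstance

/-- `Σ_K` satisfies `‖Σ_K‖∞² < γ`: there is `0 ≤ c < γ` such that `‖z‖₂² ≤ c ‖w‖₂²`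
for every realization, every deterministic initialization `r̄(0) = r̄₀ ∈ 𝔛`, and
every nonzero `w ∈ ℓ²(ℝ^q)` adapted to `(Θ_k)_k` (with `x₀ = 0`). -/
def HinfSqLtSigma {NN MM T n m q ℓ : ℕ} [NeZero T]
    (P : Matrix (Fin NN) (Fin NN) ℝ) (Qm : Matrix (Fin MM) (Fin MM) ℝ) (f : Fin MM → Bool)
    (A : Fin NN → Matrix (Fin n) (Fin n) ℝ) (B : Fin NN → Matrix (Fin n) (Fin m) ℝ)
    (C : Fin NN → Matrix (Fin ℓ) (Fin n) ℝ) (D : Fin NN → Matrix (Fin ℓ) (Fin m) ℝ)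
    (E : Fin NN → Matrix (Fin n) (Fin q) ℝ)
    (K : Fin NN → Fin T → Matrix (Fin m) (Fin n) ℝ) (γ : ℝ) : Prop :=
  ∃ c : ℝ, 0 ≤ c ∧ c < γ ∧
    ∀ (S : MJLSReal NN MM P Qm) (τ₀ : ℤ), τ₀ ≤ 0 → ∀ (σ₀ : Fin NN) (χ : XT NN MM T),
      inX f χ → (∀ᵐ ω ∂S.μ, rbarProc S.r S.s f τ₀ σ₀ 0 ω = χ) →
      ∀ (w : ℕ → S.Ω → Fin q → ℝ),
        (∀ k, Measurable[sigFiltSigma S k] (w k)) →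
        0 < (∑' k : ℕ, ∫⁻ ω, sqE (w k ω) ∂S.μ) →
        (∑' k : ℕ, ∫⁻ ω, sqE (w k ω) ∂S.μ) ≠ ⊤ →
        (∑' k : ℕ, ∫⁻ ω, sqE ((CKmat C D K (rbarProc S.r S.s f τ₀ σ₀ k ω)).mulVec
            (traj (AKmat A B K) (fun χ' => E χ'.1) (rbarProc S.r S.s f τ₀ σ₀) w 0 k ω)) ∂S.μ)
          ≤ ENNReal.ofReal c * (∑' k : ℕ, ∫⁻ ω, sqE (w k ω) ∂S.μ)

/-- `Σ̄_K` satisfies `‖Σ̄_K‖∞² < γ` (disturbances adapted to the filtration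
generated by `θ`). -/
def HinfSqLtBar {NN MM T n m q ℓ : ℕ} [NeZero T]
    (P : Matrix (Fin NN) (Fin NN) ℝ) (Qm : Matrix (Fin MM) (Fin MM) ℝ) (f : Fin MM → Bool)
    (A : Fin NN → Matrix (Fin n) (Fin n) ℝ) (B : Fin NN → Matrix (Fin n) (Fin m) ℝ)
    (C : Fin NN → Matrix (Fin ℓ) (Fin n) ℝ) (D : Fin NN → Matrix (Fin ℓ) (Fin m) ℝ)
    (E : Fin NN → Matrix (Fin n) (Fin q) ℝ)
    (K : Fin NN → Fin T → Matrix (Fin m) (Fin n) ℝ) (γ : ℝ) : Prop :=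
  ∃ c : ℝ, 0 ≤ c ∧ c < γ ∧
    ∀ (S : ThetaReal NN MM T P Qm f) (χ : XT NN MM T),
      inX f χ → (∀ᵐ ω ∂S.μ, S.θ 0 ω = χ) →
      ∀ (w : ℕ → S.Ω → Fin q → ℝ),
        (∀ k, Measurable[sigFiltBar S k] (w k)) →
        0 < (∑' k : ℕ, ∫⁻ ω, sqE (w k ω) ∂S.μ) →
        (∑' k : ℕ, ∫⁻ ω, sqE (w k ω) ∂S.μ) ≠ ⊤ →
        (∑' k : ℕ, ∫⁻ ω, sqE ((CKmat C D K (S.θ k ω)).mulVec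
            (traj (AKmat A B K) (fun χ' => E χ'.1) S.θ w 0 k ω)) ∂S.μ)
          ≤ ENNReal.ofReal c * (∑' k : ℕ, ∫⁻ ω, sqE (w k ω) ∂S.μ)

/-- The symmetric 4×4 block matrix appearing in the `H∞` LMI, with diagonal blocks
`D1, γ I_q, D3, I_ℓ`, sub-diagonal blocks `(3,1) = B31`, `(3,2) = B32`, `(4,1) = B41`,
the corresponding transposed blocks above the diagonal, and zeros elsewhere. -/
def hinfBlock {n q ℓ : ℕ} (γ : ℝ) (D1 D3 : Matrix (Fin n) (Fin n) ℝ)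
    (B31 : Matrix (Fin n) (Fin n) ℝ) (B32 : Matrix (Fin n) (Fin q) ℝ)
    (B41 : Matrix (Fin ℓ) (Fin n) ℝ) :
    Matrix ((Fin n ⊕ Fin q) ⊕ (Fin n ⊕ Fin ℓ)) ((Fin n ⊕ Fin q) ⊕ (Fin n ⊕ Fin ℓ)) ℝ :=
  Matrix.fromBlocks
    (Matrix.fromBlocks D1 0 0 (γ • (1 : Matrix (Fin q) (Fin q) ℝ)))
    (Matrix.fromBlocks B31ᵀ B41ᵀ B32ᵀ 0)
    (Matrix.fromBlocks B31 B32 B41 0)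
    (Matrix.fromBlocks D3 0 0 (1 : Matrix (Fin ℓ) (Fin ℓ) ℝ))

lemma sigma_succ_true {Ω : Type} {NN MM : ℕ} (r : ℕ → Ω → Fin NN) (s : ℕ → Ω → Fin MM)
    (f : Fin MM → Bool) (σ₀ : Fin NN) (k : ℕ) (ω : Ω) (h : f (s k ω) = true) :
    sigmaProc r s f σ₀ k ω = r k ω := by
  classical
  unfold sigmaProc
  rw [if_pos ⟨k, le_refl k, h⟩]
  congr 1
  exact Nat.findGreatest_eq h

lemma rho_succ_true {Ω : Type} {MM T : ℕ} [NeZero T] (s : ℕ → Ω → Fin MM)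
    (f : Fin MM → Bool) (τ₀ : ℤ) (k : ℕ) (ω : Ω) (h : f (s k ω) = true) :
    rhoProc (T := T) s f τ₀ k ω = 0 := by
  classical
  have h1 : tauZ s f τ₀ k ω = k := by
    unfold tauZ
    rw [if_pos ⟨k, le_refl k, h⟩]
    congr 1
    exact Nat.findGreatest_eq h
  unfold rhoProc
  rw [h1]
  apply Fin.ext
  simp [intToFin]

lemma exists_obs_succ {MM : ℕ} {Ω : Type} (s : ℕ → Ω → Fin MM)
    (f : Fin MM → Bool) (k : ℕ) (ω : Ω) (h : ¬ f (s (k + 1) ω) = true) :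
    (∃ j ≤ k + 1, f (s j ω) = true) ↔ (∃ j ≤ k, f (s j ω) = true) := by
  constructor
  · rintro ⟨j, hj, hf⟩
    rcases Nat.lt_or_ge k j with h1 | h1
    · have : j = k + 1 := by omega
      subst this
      exact absurd hf h
    · exact ⟨j, h1, hf⟩
  · rintro ⟨j, hj, hf⟩
    exact ⟨j, by omega, hf⟩

lemma sigma_succ_false {Ω : Type} {NN MM : ℕ} (r : ℕ → Ω → Fin NN) (s : ℕ → Ω → Fin MM)
    (f : Fin MM → Bool) (σ₀ : Fin NN) (k : ℕ) (ω : Ω) (h : ¬ f (s (k + 1) ω) = true) :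
    sigmaProc r s f σ₀ (k + 1) ω = sigmaProc r s f σ₀ k ω := by
  classical
  unfold sigmaProc
  simp only [exists_obs_succ s f k ω h]
  rw [Nat.findGreatest_of_not h]

lemma intToFin_add_one (T : ℕ) [NeZero T] (a : ℤ) :
    intToFin T (a + 1) = intToFin T a + 1 := by
  have hT : 0 < (T : ℤ) := by
    exact_mod_cast Nat.pos_of_ne_zero (NeZero.ne T)
  apply Fin.ext
  rw [Fin.val_add, Fin.coe_ofNat_eq_mod]
  have h1 : 0 ≤ a % (T : ℤ) := Int.emod_nonneg a (by omega)
  have h2 : 0 ≤ (a + 1) % (T : ℤ) := Int.emod_nonneg _ (by omega)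
  zify
  simp [intToFin, Int.toNat_of_nonneg h1, Int.toNat_of_nonneg h2]

lemma rho_succ_false {Ω : Type} {MM T : ℕ} [NeZero T] (s : ℕ → Ω → Fin MM)
    (f : Fin MM → Bool) (τ₀ : ℤ) (k : ℕ) (ω : Ω) (h : ¬ f (s (k + 1) ω) = true) :
    rhoProc (T := T) s f τ₀ (k + 1) ω = rhoProc s f τ₀ k ω + 1 := by
  classical
  have h1 : tauZ s f τ₀ (k + 1) ω = tauZ s f τ₀ k ω := by
    unfold tauZ
    simp only [exists_obs_succ s f k ω h]
    rw [Nat.findGreatest_of_not h]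
  unfold rhoProc
  rw [h1, ← intToFin_add_one]
  congr 1
  push_cast
  ring

/-- The extended state at time `k` is a function of the paths of `r`, `s` up to time `k`. -/
lemma rbar_congr {Ω : Type} {NN MM T : ℕ} [NeZero T] (r : ℕ → Ω → Fin NN)
    (s : ℕ → Ω → Fin MM) (f : Fin MM → Bool) (τ₀ : ℤ) (σ₀ : Fin NN) (ω ω' : Ω)
    (k : ℕ) (h1 : ∀ l ≤ k, r l ω = r l ω') (h2 : ∀ l ≤ k, s l ω = s l ω') :
    rbarProc (T := T) r s f τ₀ σ₀ k ω = rbarProc r s f τ₀ σ₀ k ω' := by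
  induction k with
  | zero =>
    have hr := h1 0 le_rfl
    have hs := h2 0 le_rfl
    simp only [rbarProc, sigmaProc, rhoProc, tauZ, Nat.le_zero, exists_eq_left, hr, hs,
      Nat.findGreatest_zero]
  | succ k ih =>
    have ih' := ih (fun l hl => h1 l (by omega)) (fun l hl => h2 l (by omega))
    have hr := h1 (k + 1) le_rfl
    have hs := h2 (k + 1) le_rfl
    simp only [rbarProc, Prod.mk.injEq] at ih' ⊢
    refine ⟨hr, hs, ?_⟩
    by_cases hf : f (s (k + 1) ω) = true
    · have hf' : f (s (k + 1) ω') = true := hs ▸ hf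
      rw [sigma_succ_true _ _ _ _ _ _ hf, sigma_succ_true _ _ _ _ _ _ hf',
        rho_succ_true _ _ _ _ _ hf, rho_succ_true _ _ _ _ _ hf']
      exact ⟨hr, rfl⟩
    · have hf' : ¬ f (s (k + 1) ω') = true := hs ▸ hf
      rw [sigma_succ_false _ _ _ _ _ _ hf, sigma_succ_false _ _ _ _ _ _ hf',
        rho_succ_false _ _ _ _ _ hf, rho_succ_false _ _ _ _ _ hf']
      exact ⟨ih'.2.2.1, by rw [ih'.2.2.2]⟩

lemma measurable_path {n : ℕ} (k : ℕ) (i : ℕ → Fin n) :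
    MeasurableSet {x : ℕ → Fin n | ∀ l ≤ k, x l = i l} := by
  have : {x : ℕ → Fin n | ∀ l ≤ k, x l = i l}
      = ⋂ l, ⋂ (_ : l ≤ k), (fun x : ℕ → Fin n => x l) ⁻¹' {i l} := by
    ext x; simp
  rw [this]
  exact MeasurableSet.iInter fun l => MeasurableSet.iInter fun _ =>
    measurable_pi_apply l (measurableSet_singleton _)

lemma measurable_path_succ {n : ℕ} (k : ℕ) (i : ℕ → Fin n) (j : Fin n) :
    MeasurableSet {x : ℕ → Fin n | x (k + 1) = j ∧ ∀ l ≤ k, x l = i l} := by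
  have h : MeasurableSet ((fun x : ℕ → Fin n => x (k + 1)) ⁻¹' {j}) :=
    measurable_pi_apply (k + 1) (measurableSet_singleton j)
  exact h.inter (measurable_path k i)

/-- `r̄(k) = (r(k), s(k), σ(k), ρ(k))` is a time-homogeneous Markov
chain with state space `𝔛` and transition probabilities `p̄`. -/
theorem rbar_is_markov_chain
    {Ω : Type} [MeasurableSpace Ω] (μ : Measure Ω) [IsProbabilityMeasure μ]
    {NN MM T : ℕ} [NeZero NN] [NeZero MM] [NeZero T]
    (P : Matrix (Fin NN) (Fin NN) ℝ) (Q : Matrix (Fin MM) (Fin MM) ℝ)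
    (hP0 : ∀ i j, 0 ≤ P i j) (hP1 : ∀ i, ∑ j, P i j = 1)
    (hQ0 : ∀ i j, 0 ≤ Q i j) (hQ1 : ∀ i, ∑ j, Q i j = 1)
    (r : ℕ → Ω → Fin NN) (s : ℕ → Ω → Fin MM)
    (hmr : ∀ k, Measurable (r k)) (hms : ∀ k, Measurable (s k))
    (hr : IsMarkovChain μ r fun i j => P i j) (hs : IsMarkovChain μ s fun i j => Q i j)
    (hind : IndepFun (fun ω l => r l ω) (fun ω l => s l ω) μ)
    (f : Fin MM → Bool) (τ₀ : ℤ) (hτ₀ : τ₀ ≤ 0) (σ₀ : Fin NN)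
    (k : ℕ) (χ' : XT NN MM T) (hχ' : inX f χ')
    (χ : ℕ → XT NN MM T) (hχ : ∀ j ≤ k, inX f (χ j)) :
    (μ {ω | rbarProc r s f τ₀ σ₀ (k + 1) ω = χ'
        ∧ ∀ j ≤ k, rbarProc r s f τ₀ σ₀ j ω = χ j}).toReal
      = pbar P Q f (χ k) χ'
        * (μ {ω | ∀ j ≤ k, rbarProc r s f τ₀ σ₀ j ω = χ j}).toReal := by
  by_cases hne : ∃ ω₀, ∀ j ≤ k, rbarProc r s f τ₀ σ₀ j ω₀ = χ j
  swap
  · have e1 : {ω | ∀ j ≤ k, rbarProc r s f τ₀ σ₀ j ω = χ j} = ∅ := by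
      ext ω
      simp only [Set.mem_setOf_eq, Set.mem_empty_iff_false, iff_false]
      exact fun h => hne ⟨ω, h⟩
    have e2 : {ω | rbarProc r s f τ₀ σ₀ (k + 1) ω = χ'
        ∧ ∀ j ≤ k, rbarProc r s f τ₀ σ₀ j ω = χ j} = ∅ := by
      ext ω
      simp only [Set.mem_setOf_eq, Set.mem_empty_iff_false, iff_false]
      exact fun h => hne ⟨ω, h.2⟩
    rw [e1, e2]
    simp
  obtain ⟨ω₀, hω₀⟩ := hne
  have key : ∀ ω, (∀ j ≤ k, rbarProc r s f τ₀ σ₀ j ω = χ j) ↔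
      ((∀ l ≤ k, r l ω = (χ l).1) ∧ (∀ l ≤ k, s l ω = (χ l).2.1)) := by
    intro ω
    constructor
    · intro h
      exact ⟨fun l hl => by rw [← h l hl]; rfl, fun l hl => by rw [← h l hl]; rfl⟩
    · rintro ⟨h1, h2⟩ j hj
      rw [← hω₀ j hj]
      apply rbar_congr
      · intro l hl
        rw [h1 l (hl.trans hj), ← hω₀ l (hl.trans hj)]; rfl
      · intro l hl
        rw [h2 l (hl.trans hj), ← hω₀ l (hl.trans hj)]; rfl
  have hE : (μ {ω | ∀ j ≤ k, rbarProc r s f τ₀ σ₀ j ω = χ j}).toReal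
      = (μ {ω | ∀ l ≤ k, r l ω = (χ l).1}).toReal
        * (μ {ω | ∀ l ≤ k, s l ω = (χ l).2.1}).toReal := by
    have := hind.measure_inter_preimage_eq_mul _ _
      (measurable_path k fun l => (χ l).1) (measurable_path k fun l => (χ l).2.1)
    rw [← ENNReal.toReal_mul]
    simp only [key]
    exact congrArg ENNReal.toReal this
  have hE' : (μ {ω | (r (k + 1) ω = χ'.1 ∧ ∀ l ≤ k, r l ω = (χ l).1) ∧
        (s (k + 1) ω = χ'.2.1 ∧ ∀ l ≤ k, s l ω = (χ l).2.1)}).toReal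
      = (P (χ k).1 χ'.1 * (μ {ω | ∀ l ≤ k, r l ω = (χ l).1}).toReal)
        * (Q (χ k).2.1 χ'.2.1 * (μ {ω | ∀ l ≤ k, s l ω = (χ l).2.1}).toReal) := by
    have := hind.measure_inter_preimage_eq_mul _ _
      (measurable_path_succ k (fun l => (χ l).1) χ'.1)
      (measurable_path_succ k (fun l => (χ l).2.1) χ'.2.1)
    rw [← hr k χ'.1 fun l => (χ l).1, ← hs k χ'.2.1 fun l => (χ l).2.1, ← ENNReal.toReal_mul]
    exact congrArg ENNReal.toReal this
  have step : ∀ ω, (rbarProc r s f τ₀ σ₀ (k + 1) ω = χ'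
      ∧ ∀ j ≤ k, rbarProc r s f τ₀ σ₀ j ω = χ j) ↔
      (((r (k + 1) ω = χ'.1 ∧ ∀ l ≤ k, r l ω = (χ l).1) ∧
        (s (k + 1) ω = χ'.2.1 ∧ ∀ l ≤ k, s l ω = (χ l).2.1)) ∧
        (f χ'.2.1 = true ∨ (χ'.2.2.1 = (χ k).2.2.1 ∧ χ'.2.2.2 = (χ k).2.2.2 + 1))) := by
    intro ω
    constructor
    · rintro ⟨h1, h2⟩
      have h3 := (key ω).1 h2
      have hk := h2 k le_rfl
      refine ⟨⟨⟨by rw [← h1]; rfl, h3.1⟩, ⟨by rw [← h1]; rfl, h3.2⟩⟩, ?_⟩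
      by_cases hf : f χ'.2.1 = true
      · exact Or.inl hf
      · right
        rw [← h1] at hf
        rw [← h1, ← hk]
        exact ⟨sigma_succ_false _ _ _ _ _ _ hf, rho_succ_false _ _ _ _ _ hf⟩
    · rintro ⟨⟨⟨h1, h2⟩, ⟨h3, h4⟩⟩, h5⟩
      have h6 := (key ω).2 ⟨h2, h4⟩
      refine ⟨?_, h6⟩
      have hk := h6 k le_rfl
      by_cases hf : f χ'.2.1 = true
      · obtain ⟨g1, g2⟩ := hχ' hf
        rw [← h3] at hf
        refine Prod.ext h1 (Prod.ext h3 (Prod.ext ?_ ?_))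
        · exact (sigma_succ_true _ _ _ _ _ _ hf).trans (h1.trans g1)
        · exact (rho_succ_true _ _ _ _ _ hf).trans g2.symm
      · obtain ⟨g1, g2⟩ := h5.resolve_left hf
        rw [← h3] at hf
        rw [← hk] at g1 g2
        refine Prod.ext h1 (Prod.ext h3 (Prod.ext ?_ ?_))
        · exact (sigma_succ_false _ _ _ _ _ _ hf).trans g1.symm
        · exact (rho_succ_false _ _ _ _ _ hf).trans g2.symm
  rw [hE]
  simp only [step]
  unfold pbar
  by_cases hf : f χ'.2.1 = true
  · simp only [hf, true_or, and_true, if_true]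
    rw [hE', if_pos (hχ' hf)]
    ring
  · by_cases hc : χ'.2.2.1 = (χ k).2.2.1 ∧ χ'.2.2.2 = (χ k).2.2.2 + 1
    · rw [if_neg hf, if_pos hc]
      simp only [hc, and_self, or_true, and_true]
      rw [hE']
      ring
    · rw [if_neg hf, if_neg hc]
      simp only [hf, hc, or_self, and_false]
      simp

end
end

section
/- For all integers 0 ≤ k₀ ≤ k and all χ_{k₀},…,χ_k ∈ 𝔛 with Pr(r̄(j)=χ_j for all k₀ ≤ j ≤ k) > 0, writing χ_k = (α_k,β_k,γ_k,δ_k), the following holds for every χ' = (α',β',γ',δ') ∈ 𝔛 with f(β') = 1: Pr(r̄(k+1)=χ' | r̄(j)=χ_j for all k₀ ≤ j ≤ k) = 𝟙(α'=γ' and δ'=1) · P_{α_k α'} · Q_{β_k β'}. -/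
open MeasureTheory ProbabilityTheory Matrix

noncomputable section

lemma aux_findGreatest_congr {p q : ℕ → Prop} [DecidablePred p] [DecidablePred q] (n : ℕ)
    (h : ∀ i ≤ n, (p i ↔ q i)) : Nat.findGreatest p n = Nat.findGreatest q n := by
  induction n with
  | zero => simp
  | succ n ih =>
    rw [Nat.findGreatest_succ, Nat.findGreatest_succ, ih (fun i hi => h i (by omega))]
    have := h (n + 1) le_rfl
    by_cases hq : q (n + 1)
    · rw [if_pos hq, if_pos (this.2 hq)]
    · rw [if_neg hq, if_neg (fun hp => hq (this.1 hp))]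

lemma aux_rbar_congr {Ω : Type} {NN MM T : ℕ} [NeZero T] (r : ℕ → Ω → Fin NN)
    (s : ℕ → Ω → Fin MM) (f : Fin MM → Bool) (τ₀ : ℤ) (σ₀ : Fin NN)
    (j : ℕ) (ω ω' : Ω) (h : ∀ l ≤ j, r l ω = r l ω' ∧ s l ω = s l ω') :
    (rbarProc r s f τ₀ σ₀ j ω : XT NN MM T) = rbarProc r s f τ₀ σ₀ j ω' := by
  classical
  have hfg : Nat.findGreatest (fun j => f (s j ω) = true) j
      = Nat.findGreatest (fun j => f (s j ω') = true) j :=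
    aux_findGreatest_congr j (fun i hi => by rw [(h i hi).2])
  have hex : (∃ i ≤ j, f (s i ω) = true) ↔ (∃ i ≤ j, f (s i ω') = true) := by
    constructor
    · rintro ⟨i, hi, h1⟩
      exact ⟨i, hi, by rw [← (h i hi).2]; exact h1⟩
    · rintro ⟨i, hi, h1⟩
      exact ⟨i, hi, by rw [(h i hi).2]; exact h1⟩
  have htau : tauZ s f τ₀ j ω = tauZ s f τ₀ j ω' := by
    unfold tauZ
    by_cases hc : ∃ i ≤ j, f (s i ω) = true
    · rw [if_pos hc, if_pos (hex.1 hc)]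
      exact congrArg Nat.cast (aux_findGreatest_congr j (fun i hi => by rw [(h i hi).2]))
    · rw [if_neg hc, if_neg (fun h' => hc (hex.2 h'))]
  have hsig : sigmaProc r s f σ₀ j ω = sigmaProc r s f σ₀ j ω' := by
    unfold sigmaProc
    by_cases hc : ∃ i ≤ j, f (s i ω) = true
    · rw [if_pos hc, if_pos (hex.1 hc)]
      rw [aux_findGreatest_congr (q := fun j => f (s j ω') = true) j
        (fun i hi => by rw [(h i hi).2])]
      exact (h _ (Nat.findGreatest_le _)).1
    · rw [if_neg hc, if_neg (fun h' => hc (hex.2 h'))]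
  unfold rbarProc rhoProc
  rw [htau, hsig, (h j le_rfl).1, (h j le_rfl).2]

lemma aux_rbar_obs {Ω : Type} {NN MM T : ℕ} [NeZero T] (r : ℕ → Ω → Fin NN)
    (s : ℕ → Ω → Fin MM) (f : Fin MM → Bool) (τ₀ : ℤ) (σ₀ : Fin NN)
    (k : ℕ) (χ' : XT NN MM T) (hχ' : inX f χ') (hf : f χ'.2.1 = true) (ω : Ω) :
    rbarProc r s f τ₀ σ₀ k ω = χ' ↔ r k ω = χ'.1 ∧ s k ω = χ'.2.1 := by
  constructor
  · rintro rfl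
    exact ⟨rfl, rfl⟩
  · rintro ⟨h1, h2⟩
    obtain ⟨h3, h4⟩ := hχ' hf
    have hs : f (s k ω) = true := by rw [h2]; exact hf
    have hex : ∃ i ≤ k, f (s i ω) = true := ⟨k, le_rfl, hs⟩
    have hsig : sigmaProc r s f σ₀ k ω = r k ω := by
      unfold sigmaProc
      rw [if_pos hex, Nat.findGreatest_eq hs]
    have htau : tauZ s f τ₀ k ω = k := by
      unfold tauZ
      rw [if_pos hex, Nat.findGreatest_eq hs]
    have hrho : (rhoProc s f τ₀ k ω : Fin T) = 0 := by
      unfold rhoProc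
      rw [htau]
      apply Fin.ext
      simp [intToFin]
    unfold rbarProc
    rw [hsig, hrho, h1, h2]
    ext1
    · rfl
    ext1
    · rfl
    ext1
    · exact h3
    · exact h4.symm

lemma aux_path {Ω : Type} [MeasurableSpace Ω] (μ : Measure Ω) [IsProbabilityMeasure μ]
    {NN MM : ℕ} (P : Matrix (Fin NN) (Fin NN) ℝ) (Q : Matrix (Fin MM) (Fin MM) ℝ)
    (r : ℕ → Ω → Fin NN) (s : ℕ → Ω → Fin MM)
    (hr : IsMarkovChain μ r fun i j => P i j) (hs : IsMarkovChain μ s fun i j => Q i j)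
    (hind : IndepFun (fun ω l => r l ω) (fun ω l => s l ω) μ)
    (k : ℕ) (a : ℕ → Fin NN) (b : ℕ → Fin MM) (x : Fin NN) (y : Fin MM) :
    μ.real {ω | (r (k + 1) ω = x ∧ s (k + 1) ω = y) ∧ ∀ l ≤ k, r l ω = a l ∧ s l ω = b l}
      = P (a k) x * Q (b k) y * μ.real {ω | ∀ l ≤ k, r l ω = a l ∧ s l ω = b l} := by
  have hm : ∀ {n : ℕ} (c : ℕ → Fin n), MeasurableSet {g : ℕ → Fin n | ∀ l ≤ k, g l = c l} := by
    intro n c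
    have : {g : ℕ → Fin n | ∀ l ≤ k, g l = c l}
        = ⋂ l, ⋂ (_ : l ≤ k), (fun g : ℕ → Fin n => g l) ⁻¹' {c l} := by
      ext g; simp
    rw [this]
    exact MeasurableSet.iInter fun l => MeasurableSet.iInter fun _ =>
      (measurable_pi_apply l) (measurableSet_singleton _)
  have hm' : ∀ {n : ℕ} (c : ℕ → Fin n) (z : Fin n),
      MeasurableSet {g : ℕ → Fin n | g (k + 1) = z ∧ ∀ l ≤ k, g l = c l} := by
    intro n c z
    have h1 : MeasurableSet ((fun g : ℕ → Fin n => g (k + 1)) ⁻¹' {z}) :=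
      (measurable_pi_apply (k + 1)) (measurableSet_singleton z)
    have h2 : {g : ℕ → Fin n | g (k + 1) = z ∧ ∀ l ≤ k, g l = c l}
        = ((fun g : ℕ → Fin n => g (k + 1)) ⁻¹' {z}) ∩ {g | ∀ l ≤ k, g l = c l} := by
      ext g; simp
    rw [h2]
    exact h1.inter (hm c)
  have e1 := hind.measure_inter_preimage_eq_mul _ _ (hm a) (hm b)
  have e2 := hind.measure_inter_preimage_eq_mul _ _ (hm' a x) (hm' b y)
  have s1 : {ω | ∀ l ≤ k, r l ω = a l ∧ s l ω = b l}
      = ((fun ω l => r l ω) ⁻¹' {g : ℕ → Fin NN | ∀ l ≤ k, g l = a l})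
        ∩ ((fun ω l => s l ω) ⁻¹' {g : ℕ → Fin MM | ∀ l ≤ k, g l = b l}) := by
    ext ω
    simp only [Set.mem_setOf_eq, Set.mem_inter_iff, Set.mem_preimage]
    exact ⟨fun h => ⟨fun l hl => (h l hl).1, fun l hl => (h l hl).2⟩,
      fun h l hl => ⟨h.1 l hl, h.2 l hl⟩⟩
  have s2 : {ω | (r (k + 1) ω = x ∧ s (k + 1) ω = y) ∧ ∀ l ≤ k, r l ω = a l ∧ s l ω = b l}
      = ((fun ω l => r l ω) ⁻¹' {g : ℕ → Fin NN | g (k + 1) = x ∧ ∀ l ≤ k, g l = a l})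
        ∩ ((fun ω l => s l ω) ⁻¹' {g : ℕ → Fin MM | g (k + 1) = y ∧ ∀ l ≤ k, g l = b l}) := by
    ext ω
    simp only [Set.mem_setOf_eq, Set.mem_inter_iff, Set.mem_preimage]
    exact ⟨fun h => ⟨⟨h.1.1, fun l hl => (h.2 l hl).1⟩, ⟨h.1.2, fun l hl => (h.2 l hl).2⟩⟩,
      fun h => ⟨⟨h.1.1, h.2.1⟩, fun l hl => ⟨h.1.2 l hl, h.2.2 l hl⟩⟩⟩
  have m1 := hr k x a
  have m2 := hs k y b
  rw [s1, s2, Measure.real, Measure.real, e1, e2, ENNReal.toReal_mul, ENNReal.toReal_mul]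
  simp only [Set.preimage_setOf_eq]
  rw [m1, m2]
  ring

/-- the conditional transition probabilities of `r̄` at a state `χ'`
with `f(β') = 1`. -/
theorem rbar_transition_observed
    {Ω : Type} [MeasurableSpace Ω] (μ : Measure Ω) [IsProbabilityMeasure μ]
    {NN MM T : ℕ} [NeZero NN] [NeZero MM] [NeZero T]
    (P : Matrix (Fin NN) (Fin NN) ℝ) (Q : Matrix (Fin MM) (Fin MM) ℝ)
    (hP0 : ∀ i j, 0 ≤ P i j) (hP1 : ∀ i, ∑ j, P i j = 1)
    (hQ0 : ∀ i j, 0 ≤ Q i j) (hQ1 : ∀ i, ∑ j, Q i j = 1)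
    (r : ℕ → Ω → Fin NN) (s : ℕ → Ω → Fin MM)
    (hmr : ∀ k, Measurable (r k)) (hms : ∀ k, Measurable (s k))
    (hr : IsMarkovChain μ r fun i j => P i j) (hs : IsMarkovChain μ s fun i j => Q i j)
    (hind : IndepFun (fun ω l => r l ω) (fun ω l => s l ω) μ)
    (f : Fin MM → Bool) (τ₀ : ℤ) (hτ₀ : τ₀ ≤ 0) (σ₀ : Fin NN)
    (k₀ k : ℕ) (hk : k₀ ≤ k)
    (χ : ℕ → XT NN MM T) (hχ : ∀ j, k₀ ≤ j → j ≤ k → inX f (χ j))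
    (χ' : XT NN MM T) (hχ' : inX f χ') (hf : f χ'.2.1 = true)
    (hpos : 0 < (μ {ω | ∀ j, k₀ ≤ j → j ≤ k → rbarProc r s f τ₀ σ₀ j ω = χ j}).toReal) :
    (μ ({ω | rbarProc r s f τ₀ σ₀ (k + 1) ω = χ'}
        ∩ {ω | ∀ j, k₀ ≤ j → j ≤ k → rbarProc r s f τ₀ σ₀ j ω = χ j})).toReal
      / (μ {ω | ∀ j, k₀ ≤ j → j ≤ k → rbarProc r s f τ₀ σ₀ j ω = χ j}).toReal
      = (if χ'.1 = χ'.2.2.1 ∧ χ'.2.2.2 = 0 then (1 : ℝ) else 0)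
          * P (χ k).1 χ'.1 * Q (χ k).2.1 χ'.2.1 := by
  classical
  set E := {ω | ∀ j, k₀ ≤ j → j ≤ k → rbarProc r s f τ₀ σ₀ j ω = χ j} with hE
  rw [div_eq_iff hpos.ne', if_pos (hχ' hf), one_mul]
  have hA : {ω | rbarProc r s f τ₀ σ₀ (k + 1) ω = χ'}
      = {ω | r (k + 1) ω = χ'.1 ∧ s (k + 1) ω = χ'.2.1} := by
    ext ω
    exact aux_rbar_obs r s f τ₀ σ₀ (k + 1) χ' hχ' hf ω
  rw [hA]
  set A := {ω | r (k + 1) ω = χ'.1 ∧ s (k + 1) ω = χ'.2.1} with hAdef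
  let H : Ω → (Fin (k + 1) → Fin NN × Fin MM) := fun ω l => (r l ω, s l ω)
  have hH : Measurable H := measurable_pi_lambda _ fun l => (hmr l).prodMk (hms l)
  have hsum : ∀ B : Set Ω, (μ B).toReal = ∑ p, μ.real (H ⁻¹' {p} ∩ B) := by
    intro B
    have h1 : ∀ p, μ.real (H ⁻¹' {p} ∩ B) = (μ.restrict B).real (H ⁻¹' {p}) := fun p => by
      rw [measureReal_restrict_apply (hH (measurableSet_singleton p))]
    simp_rw [h1]
    rw [sum_measureReal_preimage_singleton _ (fun p _ => hH (measurableSet_singleton p))]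
    simp [Measure.real]
  rw [hsum (A ∩ E), hsum E, Finset.mul_sum]
  refine Finset.sum_congr rfl fun p _ => ?_
  by_cases hne : ∃ ω₀ ∈ E, H ω₀ = p
  · obtain ⟨ω₀, hω₀, rfl⟩ := hne
    have hiff : ∀ ω, H ω = H ω₀ ↔ ∀ l ≤ k, r l ω = r l ω₀ ∧ s l ω = s l ω₀ := by
      intro ω
      constructor
      · intro h l hl
        have := congrFun h ⟨l, by omega⟩
        exact ⟨congrArg Prod.fst this, congrArg Prod.snd this⟩
      · intro h
        funext l
        obtain ⟨h1, h2⟩ := h l (by omega)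
        exact Prod.ext h1 h2
    have hsub : ∀ ω, H ω = H ω₀ → ω ∈ E := by
      intro ω h j hj hjk
      rw [aux_rbar_congr r s f τ₀ σ₀ j ω ω₀ (fun l hl => (hiff ω).1 h l (hl.trans hjk))]
      exact hω₀ j hj hjk
    have e1 : H ⁻¹' {H ω₀} ∩ E = {ω | ∀ l ≤ k, r l ω = r l ω₀ ∧ s l ω = s l ω₀} := by
      ext ω
      simp only [Set.mem_inter_iff, Set.mem_preimage, Set.mem_singleton_iff, Set.mem_setOf_eq,
        ← hiff]
      exact ⟨fun h => h.1, fun h => ⟨h, hsub ω h⟩⟩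
    have e2 : H ⁻¹' {H ω₀} ∩ (A ∩ E) = {ω | (r (k + 1) ω = χ'.1 ∧ s (k + 1) ω = χ'.2.1) ∧
        ∀ l ≤ k, r l ω = r l ω₀ ∧ s l ω = s l ω₀} := by
      ext ω
      simp only [Set.mem_inter_iff, Set.mem_preimage, Set.mem_singleton_iff, Set.mem_setOf_eq,
        ← hiff, hAdef]
      exact ⟨fun h => ⟨h.2.1, h.1⟩, fun h => ⟨h.2, h.1, hsub ω h.2⟩⟩
    rw [e1, e2, aux_path μ P Q r s hr hs hind k (fun l => r l ω₀) (fun l => s l ω₀)]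
    rw [← hω₀ k hk le_rfl]
    rfl
  · have e1 : H ⁻¹' {p} ∩ E = ∅ := by
      ext ω
      simp only [Set.mem_inter_iff, Set.mem_preimage, Set.mem_singleton_iff,
        Set.mem_empty_iff_false, iff_false]
      exact fun h => hne ⟨ω, h.2, h.1⟩
    have e2 : H ⁻¹' {p} ∩ (A ∩ E) = ∅ := by
      rw [Set.inter_left_comm, e1, Set.inter_empty]
    rw [e1, e2]
    simp

end
end
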